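/- arXiv:1504.07290 — 2 statements merged into one kernel-verified Lean document; each statement's English description precedes it below -/
import Mathlib

section
/- The cyclic 2-coloring of K₁₇ determined by C₀ and C₁ has no monochromatic K_{4,3}: there do not exist disjoint subsets A, B of ZMod 17 with |A| = 4 and |B| = 3 such that a − b ∈ C₀ for every a ∈ A and b ∈ B, and likewise there are no such A, B with a − b ∈ C₁ for every a ∈ A and b ∈ B. -/
/-- The `b₀` color class of the cyclic coloring of `K₁₇`: the difference set
`{1,2,4,8,9,13,15,16} ⊆ ZMod 17`. -/
def C0 : Finset (ZMod 17) := {1, 2, 4, 8, 9, 13, 15, 16}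

/-- The `b₁` color class of the cyclic coloring of `K₁₇`: the difference set
`{3,5,6,7,10,11,12,14} ⊆ ZMod 17`. -/
def C1 : Finset (ZMod 17) := {3, 5, 6, 7, 10, 11, 12, 14}

/-!
`C0` consists of the nonzero squares of `ZMod 17` and `C1` of the nonsquares, so an affine map
`x ↦ u * x + v` with `u ≠ 0` either preserves both color classes or exchanges them. Affine maps act
transitively on ordered pairs of distinct points, so any three vertices may be moved to `0, 1, e`.
In color `C0` the vertices `0` and `1` have only three common neighbors; in color `C1` they have
four, but no third vertex is joined to all four of them.
-/

open scoped Pointwise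

section CommonNeighbors

variable {G : Type*} [Fintype G] [DecidableEq G]

/-- The common neighbors of the vertices in `B` in the Cayley graph of `G` with connection set `C`.
Adjacency of `a` to `b` is encoded as `a - b ∈ C`, without requiring `C` to be symmetric. -/
def commonNeighbors [Sub G] (C B : Finset G) : Finset G := {a | ∀ b ∈ B, a - b ∈ C}

theorem mem_commonNeighbors [Sub G] {C B : Finset G} {a : G} :
    a ∈ commonNeighbors C B ↔ ∀ b ∈ B, a - b ∈ C := by
  simp only [commonNeighbors, Finset.mem_filter_univ]

theorem commonNeighbors_anti [Sub G] (C : Finset G) : Antitone (commonNeighbors C) :=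
  fun _ _ h _ ha ↦ mem_commonNeighbors.2 fun b hb ↦ mem_commonNeighbors.1 ha b (h hb)

theorem card_le_card_commonNeighbors [Sub G] {A B C : Finset G}
    (hAB : ∀ a ∈ A, ∀ b ∈ B, a - b ∈ C) : A.card ≤ (commonNeighbors C B).card :=
  Finset.card_le_card fun a ha ↦ mem_commonNeighbors.2 (hAB a ha)

theorem commonNeighbors_vadd [AddCommGroup G] (v : G) (C B : Finset G) :
    commonNeighbors C (v +ᵥ B) = v +ᵥ commonNeighbors C B := by
  ext a
  rw [mem_commonNeighbors, ← Finset.neg_vadd_mem_iff, mem_commonNeighbors]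
  simp only [Finset.vadd_finset_def, Finset.forall_mem_image, vadd_eq_add, neg_add_eq_sub, sub_sub]

theorem commonNeighbors_smul {Γ : Type*} [AddGroup G] [Group Γ] [DistribMulAction Γ G] (u : Γ)
    (C B : Finset G) : commonNeighbors (u • C) (u • B) = u • commonNeighbors C B := by
  ext a
  rw [mem_commonNeighbors, ← Finset.inv_smul_mem_iff, mem_commonNeighbors]
  simp only [Finset.smul_finset_def (s := B), Finset.forall_mem_image, ← Finset.inv_smul_mem_iff,
    smul_sub, inv_smul_smul]

theorem card_commonNeighbors_vadd_smul {Γ : Type*} [AddCommGroup G] [Group Γ]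
    [DistribMulAction Γ G] (v : G) (u : Γ) (C B : Finset G) :
    (commonNeighbors C (v +ᵥ u • B)).card = (commonNeighbors (u⁻¹ • C) B).card := by
  calc (commonNeighbors C (v +ᵥ u • B)).card
      = (commonNeighbors C (u • B)).card := by
        rw [commonNeighbors_vadd, Finset.card_vadd_finset]
    _ = (commonNeighbors (u • u⁻¹ • C) (u • B)).card := by rw [smul_inv_smul]
    _ = (commonNeighbors (u⁻¹ • C) B).card := by
        rw [commonNeighbors_smul, Finset.card_smul_finset]

end CommonNeighbors

theorem exists_eq_vadd_smul_of_card_eq_three {K : Type*} [DivisionRing K] [DecidableEq K]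
    {B : Finset K} (hB : B.card = 3) :
    ∃ (v : K) (u : Kˣ) (e : K), e ≠ 0 ∧ e ≠ 1 ∧ B = v +ᵥ u • ({0, 1, e} : Finset K) := by
  obtain ⟨x, y, z, hxy, hxz, hyz, rfl⟩ := Finset.card_eq_three.1 hB
  have hyx : y - x ≠ 0 := sub_ne_zero.2 hxy.symm
  have hzx : z - x ≠ 0 := sub_ne_zero.2 hxz.symm
  refine ⟨x, Units.mk0 (y - x) hyx, (y - x)⁻¹ * (z - x), mul_ne_zero (inv_ne_zero hyx) hzx, ?_, ?_⟩
  · rw [Ne, inv_mul_eq_one₀ hyx, sub_left_inj]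
    exact hyz
  · simp [Finset.smul_finset_insert, Finset.vadd_finset_insert, Units.smul_def, hyx]

section QuadraticClass

variable (F : Type*) [Field F] [Fintype F] [DecidableEq F]

/-- The elements of `F` with quadratic character `ε`: the nonzero squares for `ε = 1` and the
nonsquares for `ε = -1`. Taking `ε` in `ℤˣ` leaves out `0`, whose character is `0`. -/
def quadraticClass (ε : ℤˣ) : Finset F := {x | quadraticChar F x = ε}

variable {F}

theorem mem_quadraticClass {ε : ℤˣ} {x : F} : x ∈ quadraticClass F ε ↔ quadraticChar F x = ε := by
  simp only [quadraticClass, Finset.mem_filter_univ]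

theorem smul_quadraticClass (u : Fˣ) (ε : ℤˣ) :
    u • quadraticClass F ε = quadraticClass F ((quadraticChar F).toUnitHom u * ε) := by
  ext x
  rw [← Finset.inv_smul_mem_iff, mem_quadraticClass, mem_quadraticClass, Units.smul_def,
    smul_eq_mul, map_mul, ← MulChar.coe_toUnitHom, map_inv, Units.inv_mul_eq_iff_eq_mul,
    Units.val_mul]

end QuadraticClass

theorem commonNeighbors_C0_zero_one : commonNeighbors C0 {0, 1} = {2, 9, 16} := by
  decide

theorem commonNeighbors_C1_zero_one : commonNeighbors C1 {0, 1} = {6, 7, 11, 12} := by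
  decide

theorem eq_zero_or_one_of_commonNeighbors_C1_subset {e : ZMod 17}
    (he : commonNeighbors C1 {0, 1} ⊆ commonNeighbors C1 {0, 1, e}) : e = 0 ∨ e = 1 := by
  have joined_to_all : ∀ a ∈ ({6, 7, 11, 12} : Finset (ZMod 17)), a - e ∈ C1 := fun a ha ↦
    mem_commonNeighbors.1 (he (commonNeighbors_C1_zero_one ▸ ha)) e (by simp)
  have only_zero_one : ∀ x : ZMod 17,
      (∀ a ∈ ({6, 7, 11, 12} : Finset (ZMod 17)), a - x ∈ C1) → x = 0 ∨ x = 1 := by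
    decide
  exact only_zero_one e joined_to_all

theorem card_commonNeighbors_C0_triple_lt (e : ZMod 17) :
    (commonNeighbors C0 {0, 1, e}).card < 4 := by
  calc (commonNeighbors C0 {0, 1, e}).card
      ≤ (commonNeighbors C0 {0, 1}).card :=
        Finset.card_le_card (commonNeighbors_anti C0 (by grind))
    _ = 3 := by rw [commonNeighbors_C0_zero_one]; rfl
    _ < 4 := by decide

theorem card_commonNeighbors_C1_triple_lt {e : ZMod 17} (he₀ : e ≠ 0) (he₁ : e ≠ 1) :
    (commonNeighbors C1 {0, 1, e}).card < 4 := by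
  have ssubset : commonNeighbors C1 {0, 1, e} ⊂ commonNeighbors C1 {0, 1} :=
    ⟨commonNeighbors_anti C1 (by grind),
      fun h ↦ (eq_zero_or_one_of_commonNeighbors_C1_subset h).elim he₀ he₁⟩
  have card_four : (commonNeighbors C1 {0, 1}).card = 4 := by
    rw [commonNeighbors_C1_zero_one]; rfl
  exact (Finset.card_lt_card ssubset).trans_eq card_four

section SeventeenElements

local instance fact_prime_seventeen : Fact (Nat.Prime 17) := ⟨by norm_num⟩

theorem quadraticClass_one_eq_C0 : quadraticClass (ZMod 17) 1 = C0 := by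
  decide

theorem quadraticClass_neg_one_eq_C1 : quadraticClass (ZMod 17) (-1) = C1 := by
  decide

theorem card_commonNeighbors_quadraticClass_lt (ε : ℤˣ) {B : Finset (ZMod 17)} (hB : B.card = 3) :
    (commonNeighbors (quadraticClass (ZMod 17) ε) B).card < 4 := by
  obtain ⟨v, u, e, he₀, he₁, rfl⟩ := exists_eq_vadd_smul_of_card_eq_three hB
  rw [card_commonNeighbors_vadd_smul, smul_quadraticClass]
  rcases Int.units_eq_one_or ((quadraticChar (ZMod 17)).toUnitHom u⁻¹ * ε) with hε | hε
  · rw [hε, quadraticClass_one_eq_C0]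
    exact card_commonNeighbors_C0_triple_lt e
  · rw [hε, quadraticClass_neg_one_eq_C1]
    exact card_commonNeighbors_C1_triple_lt he₀ he₁

theorem card_commonNeighbors_C0_lt {B : Finset (ZMod 17)} (hB : B.card = 3) :
    (commonNeighbors C0 B).card < 4 :=
  quadraticClass_one_eq_C0 ▸ card_commonNeighbors_quadraticClass_lt 1 hB

theorem card_commonNeighbors_C1_lt {B : Finset (ZMod 17)} (hB : B.card = 3) :
    (commonNeighbors C1 B).card < 4 :=
  quadraticClass_neg_one_eq_C1 ▸ card_commonNeighbors_quadraticClass_lt (-1) hB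

end SeventeenElements

/-- The cyclic 2-coloring of `K₁₇` determined by `C₀` and `C₁` has no monochromatic `K_{4,3}`:
there are no disjoint `A, B ⊆ ZMod 17` with `|A| = 4`, `|B| = 3` such that `a - b ∈ C₀` for
all `a ∈ A`, `b ∈ B`, and likewise for `C₁`. -/
theorem cyclic_coloring_no_mono_K43 :
    (¬ ∃ A B : Finset (ZMod 17), Disjoint A B ∧ A.card = 4 ∧ B.card = 3 ∧
      ∀ a ∈ A, ∀ b ∈ B, a - b ∈ C0) ∧
    (¬ ∃ A B : Finset (ZMod 17), Disjoint A B ∧ A.card = 4 ∧ B.card = 3 ∧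
      ∀ a ∈ A, ∀ b ∈ B, a - b ∈ C1) := by
  constructor
  · rintro ⟨A, B, -, hA, hB, hAB⟩
    exact ((card_le_card_commonNeighbors hAB).trans_lt (card_commonNeighbors_C0_lt hB)).ne hA
  · rintro ⟨A, B, -, hA, hB, hAB⟩
    exact ((card_le_card_commonNeighbors hAB).trans_lt (card_commonNeighbors_C1_lt hB)).ne hA
end

section
/- Let s be a splitting coloring of P = {1,…,14} with no monochromatic K₄, no monochromatic K_{4,3}, and no monochromatic K_{5,2}. Then the induced coloring c on the 3432 seven-element subsets of P is good with respect to M₂: it satisfies conditions (i), (ii), and (iii). -/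
/-- The three colors: red `r` and the two blues `b0`, `b1`. -/
inductive Color where
  | r : Color
  | b0 : Color
  | b1 : Color
  deriving DecidableEq

/-- `M₂ = L³ \ {b₀,b₁}³`: the triples of colors that are not all blue. -/
def M2 (t : Color × Color × Color) : Prop :=
  ¬ ((t.1 = Color.b0 ∨ t.1 = Color.b1) ∧ (t.2.1 = Color.b0 ∨ t.2.1 = Color.b1) ∧
     (t.2.2 = Color.b0 ∨ t.2.2 = Color.b1))

/-!
The color of an edge depends only on the intersection of its ends. Over an edge `XY`, a third vertex
`Z` can therefore be found by prescribing its traces `A ⊆ X` and `B ⊆ Y`, which must agree on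
`X ∩ Y`; the other points of `Z` are taken outside `X ∪ Y`, where exactly `|X ∩ Y|` points are
available. A large trace is red, so only two blue traces are delicate, and they are needed only over
a red edge, when `|X \ Y| ≤ 4`. The absence of a monochromatic `K₄`, `K_{4,3}`, `K_{5,2}` provides
the traces for `|X \ Y| = 4, 3, 2` respectively. Conversely, three halves of a 14-point set cannot
pairwise meet in at most two points, as `3 * 7 - 3 * 2 > 14`; so no triangle is all blue.
-/

theorem m2_iff {i j k : Color} :
    M2 (i, j, k) ↔ i = Color.r ∨ j = Color.r ∨ k = Color.r := by
  cases i <;> cases j <;> cases k <;> simp [M2]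

theorem Color.exists_forall_eq_of_ne {k : Color} (hk : k ≠ Color.r) :
    ∃ k', ∀ l, l ≠ Color.r → l ≠ k → l = k' := by
  cases k with
  | r => exact absurd rfl hk
  | b0 => exact ⟨Color.b1, fun l hl hl' => by cases l <;> trivial⟩
  | b1 => exact ⟨Color.b0, fun l hl hl' => by cases l <;> trivial⟩

section Splitting

variable {α : Type*}

/-- A splitting coloring: a symmetric coloring of the pairs of distinct points by the two blues. -/
structure IsSplitting (s : α → α → Color) : Prop where
  symm : ∀ i j, i ≠ j → s i j = s j i
  blue : ∀ i j, i ≠ j → s i j = Color.b0 ∨ s i j = Color.b1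

/-- The coloring `s` has no monochromatic complete subgraph `Kₘ`. -/
def NoMonoClique (s : α → α → Color) (m : ℕ) : Prop :=
  ¬ ∃ (b : Color) (W : Finset α), W.card = m ∧ ∀ i ∈ W, ∀ j ∈ W, i ≠ j → s i j = b

/-- The coloring `s` has no monochromatic complete bipartite subgraph `K_{m,n}`. -/
def NoMonoBiclique (s : α → α → Color) (m n : ℕ) : Prop :=
  ¬ ∃ (b : Color) (A B : Finset α), Disjoint A B ∧ A.card = m ∧ B.card = n ∧
    ∀ i ∈ A, ∀ j ∈ B, s i j = b

variable {s : α → α → Color} {m n : ℕ} {k : Color}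

theorem IsSplitting.ne_red (hs : IsSplitting s) {i j : α} (hij : i ≠ j) : s i j ≠ Color.r := by
  rcases hs.blue i j hij with h | h <;> simp [h]

theorem NoMonoClique.exists_eq (hs : IsSplitting s) (h : NoMonoClique s m) {S : Finset α}
    (hS : m ≤ S.card) (hk : k ≠ Color.r) : ∃ i ∈ S, ∃ j ∈ S, i ≠ j ∧ s i j = k := by
  by_contra! hne
  obtain ⟨k', hk'⟩ := Color.exists_forall_eq_of_ne hk
  obtain ⟨W, hWS, hW⟩ := Finset.exists_subset_card_eq hS
  exact h ⟨k', W, hW, fun i hi j hj hij =>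
    hk' _ (hs.ne_red hij) (hne i (hWS hi) j (hWS hj) hij)⟩

theorem NoMonoClique.exists_eq_of_notMem (hs : IsSplitting s) (h : NoMonoClique s m)
    {S : Finset α} (hS : m ≤ S.card + 1) (hk : k ≠ Color.r)
    (hne : ∀ i ∈ S, ∀ j ∈ S, i ≠ j → s i j ≠ k) {x : α} (hx : x ∉ S) : ∃ y ∈ S, s x y = k := by
  obtain ⟨i, hi, j, hj, hij, hijk⟩ :=
    h.exists_eq hs (S := Finset.cons x S hx) (hS.trans_eq (Finset.card_cons hx).symm) hk
  rcases Finset.mem_cons.1 hi with rfl | hiS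
  · exact ⟨j, (Finset.mem_cons.1 hj).resolve_left hij.symm, hijk⟩
  · obtain rfl := (Finset.mem_cons.1 hj).resolve_right fun hjS => hne i hiS j hjS hij hijk
    exact ⟨i, hiS, (hs.symm j i hij.symm).trans hijk⟩

theorem NoMonoBiclique.exists_eq (hs : IsSplitting s) (h : NoMonoBiclique s m n) {A B : Finset α}
    (hAB : Disjoint A B) (hA : m ≤ A.card) (hB : n ≤ B.card) (hk : k ≠ Color.r) :
    ∃ i ∈ A, ∃ j ∈ B, s i j = k := by
  by_contra! hne
  obtain ⟨k', hk'⟩ := Color.exists_forall_eq_of_ne hk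
  obtain ⟨A', hA', hcA⟩ := Finset.exists_subset_card_eq hA
  obtain ⟨B', hB', hcB⟩ := Finset.exists_subset_card_eq hB
  exact h ⟨k', A', B', hAB.mono hA' hB', hcA, hcB, fun i hi j hj =>
    hk' _ (hs.ne_red (hAB.forall_ne_finset (hA' hi) (hB' hj))) (hne i (hA' hi) j (hB' hj))⟩

end Splitting

section Induced

variable {α : Type*} [DecidableEq α] {s : α → α → Color}

/-- `InducesColor s E k` says that `k` is the color which the coloring induced by `s` gives to two
distinct vertices with intersection `E`. As a relation it needs no choice of an order on the two
points of `E` when `|E| = 2`. -/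
inductive InducesColor (s : α → α → Color) : Finset α → Color → Prop
  | empty : InducesColor s ∅ Color.b0
  | singleton (i : α) : InducesColor s {i} Color.b1
  | pair {i j : α} (hij : i ≠ j) : InducesColor s {i, j} (s i j)
  | red {E : Finset α} (hE : 3 ≤ E.card) : InducesColor s E Color.r

theorem exists_ne_red_inducesColor (hs : IsSplitting s) {E : Finset α} (hE : E.card ≤ 2) :
    ∃ k, k ≠ Color.r ∧ InducesColor s E k := by
  interval_cases h : E.card
  · obtain rfl := Finset.card_eq_zero.1 h
    exact ⟨Color.b0, by simp, .empty⟩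
  · obtain ⟨i, rfl⟩ := Finset.card_eq_one.1 h
    exact ⟨Color.b1, by simp, .singleton i⟩
  · obtain ⟨i, j, hij, rfl⟩ := Finset.card_eq_two.1 h
    exact ⟨s i j, hs.ne_red hij, .pair hij⟩

theorem exists_subset_inducesColor (hs : IsSplitting s) (hK4 : NoMonoClique s 4) {S : Finset α}
    (hS : 4 ≤ S.card) (k : Color) :
    ∃ A ⊆ S, 2 ≤ A.card ∧ A.card ≤ 3 ∧ InducesColor s A k := by
  by_cases hk : k = Color.r
  · obtain ⟨A, hAS, hA⟩ := Finset.exists_subset_card_eq (show 3 ≤ S.card by omega)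
    exact ⟨A, hAS, by omega, by omega, hk ▸ .red hA.ge⟩
  · obtain ⟨i, hi, j, hj, hij, rfl⟩ := hK4.exists_eq hs hS hk
    have hcard := Finset.card_pair hij
    exact ⟨{i, j}, by grind, by omega, by omega, .pair hij⟩

end Induced

section Traces

variable {α : Type*} [Fintype α] [DecidableEq α] {n : ℕ} {X Y : Finset α}

theorem card_add_card_add_card_le (X Y Z : Finset α) :
    X.card + Y.card + Z.card ≤
      Fintype.card α + (X ∩ Y).card + (Y ∩ Z).card + (X ∩ Z).card := by
  have hXY := Finset.card_union_add_card_inter X Y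
  have hXYZ := Finset.card_union_add_card_inter (X ∪ Y) Z
  have hinter := Finset.card_union_le (X ∩ Z) (Y ∩ Z)
  rw [← Finset.union_inter_distrib_right] at hinter
  have hle := Finset.card_le_univ (X ∪ Y ∪ Z)
  omega

theorem exists_card_eq_inter_eq {A B : Finset α} (hA : A ⊆ X) (hB : B ⊆ Y)
    (hAB : A ∩ Y = X ∩ B) (hle : (A ∪ B).card ≤ n)
    (hge : n ≤ (A ∪ B).card + (X ∪ Y)ᶜ.card) :
    ∃ Z : Finset α, Z.card = n ∧ X ∩ Z = A ∧ Y ∩ Z = B := by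
  have hdisj : Disjoint (A ∪ B) (X ∪ Y)ᶜ :=
    disjoint_compl_right.mono_left (Finset.union_subset_union hA hB)
  obtain ⟨Z, hABZ, hZ, hcard⟩ := Finset.exists_subsuperset_card_eq
    (Finset.subset_union_left (s₁ := A ∪ B) (s₂ := (X ∪ Y)ᶜ)) hle
    (by rwa [Finset.card_union_of_disjoint hdisj])
  refine ⟨Z, hcard, ?_, ?_⟩
  · ext x
    have := Finset.ext_iff.1 hAB x
    grind [Finset.mem_compl]
  · ext x
    have := Finset.ext_iff.1 hAB x
    grind [Finset.mem_compl]

end Traces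

section Edge

variable {α : Type*} [Fintype α] {n : ℕ} {X Y : Finset α}

/-- `X` and `Y` are the ends of an edge of the complete graph whose vertices are the `n`-element
subsets of a `2n`-element set. -/
structure IsEdge (n : ℕ) (X Y : Finset α) : Prop where
  card_univ : Fintype.card α = 2 * n
  card_left : X.card = n
  card_right : Y.card = n
  ne : X ≠ Y

theorem IsEdge.symm (h : IsEdge n X Y) : IsEdge n Y X :=
  ⟨h.card_univ, h.card_right, h.card_left, h.ne.symm⟩

variable [DecidableEq α]

namespace IsEdge

theorem card_sdiff_add_card_inter (h : IsEdge n X Y) : (X \ Y).card + (X ∩ Y).card = n :=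
  (Finset.card_sdiff_add_card_inter X Y).trans h.card_left

theorem card_compl_union (h : IsEdge n X Y) : (X ∪ Y)ᶜ.card = (X ∩ Y).card := by
  have := Finset.card_union_add_card_inter X Y
  have := Finset.card_add_card_compl (X ∪ Y)
  have := h.card_univ
  have := h.card_left
  have := h.card_right
  omega

theorem card_inter_lt (h : IsEdge n X Y) : (X ∩ Y).card < n := by
  by_contra! hle
  have hX := Finset.eq_of_subset_of_card_le Finset.inter_subset_left (h.card_left.trans_le hle)
  have hY := Finset.eq_of_subset_of_card_le Finset.inter_subset_right (h.card_right.trans_le hle)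
  exact h.ne (hX.symm.trans hY)

theorem card_sdiff_comm (h : IsEdge n X Y) : (Y \ X).card = (X \ Y).card :=
  Finset.card_sdiff_comm (h.card_right.trans h.card_left.symm)

end IsEdge

theorem isEdge_compl (hα : Fintype.card α = 2 * n) (hn : 0 < n) (hX : X.card = n) :
    IsEdge n X Xᶜ := by
  have hXc : Xᶜ.card = n := by
    rw [Finset.card_compl]
    omega
  have : Nonempty α := (Finset.card_pos.1 (hX ▸ hn)).to_type
  exact ⟨hα, hX, hXc, ne_compl_self⟩

end Edge

section Apex

variable {α : Type*} [DecidableEq α] {s : α → α → Color} {n : ℕ} {X Y : Finset α} {j k : Color}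

/-- In the coloring of `n`-element sets induced by `s`, the edge `XY` extends to a triangle whose
third vertex is joined to `X` by the color `k` and to `Y` by the color `j`. -/
def HasApex (s : α → α → Color) (n : ℕ) (X Y : Finset α) (k j : Color) : Prop :=
  ∃ Z : Finset α, Z.card = n ∧ Z ≠ X ∧ Z ≠ Y ∧ InducesColor s (X ∩ Z) k ∧ InducesColor s (Y ∩ Z) j

theorem HasApex.symm : HasApex s n X Y k j → HasApex s n Y X j k :=
  fun ⟨Z, hZ, hZX, hZY, hk, hj⟩ => ⟨Z, hZ, hZY, hZX, hj, hk⟩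

variable [Fintype α]

theorem IsEdge.hasApex_of_traces (h : IsEdge n X Y) {A B : Finset α} (hA : A ⊆ X) (hB : B ⊆ Y)
    (hAB : A ∩ Y = X ∩ B) (hAn : A.card < n) (hBn : B.card < n) (hle : (A ∪ B).card ≤ n)
    (hge : n ≤ (A ∪ B).card + (X ∩ Y).card) (hk : InducesColor s A k) (hj : InducesColor s B j) :
    HasApex s n X Y k j := by
  obtain ⟨Z, hZ, rfl, rfl⟩ :=
    exists_card_eq_inter_eq hA hB hAB hle (h.card_compl_union.symm ▸ hge)
  refine ⟨Z, hZ, ?_, ?_, hk, hj⟩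
  · rintro rfl
    simp [hZ] at hAn
  · rintro rfl
    simp [hZ] at hBn

theorem IsEdge.hasApex_of_disjoint_traces (h : IsEdge n X Y) {A B : Finset α} (hA : A ⊆ X \ Y)
    (hB : B ⊆ Y \ X) (hAn : A.card < n) (hBn : B.card < n) (hle : A.card + B.card ≤ n)
    (hge : n ≤ A.card + B.card + (X ∩ Y).card) (hk : InducesColor s A k)
    (hj : InducesColor s B j) : HasApex s n X Y k j := by
  have hcard : (A ∪ B).card = A.card + B.card :=
    Finset.card_union_of_disjoint (disjoint_sdiff_sdiff.mono hA hB)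
  exact h.hasApex_of_traces (hA.trans Finset.sdiff_subset) (hB.trans Finset.sdiff_subset)
    (by grind) hAn hBn (by omega) (by omega) hk hj

theorem IsEdge.hasApex_red_right (h : IsEdge n X Y) (hn : 7 ≤ n) (hs : IsSplitting s)
    (hK4 : NoMonoClique s 4) (k : Color) : HasApex s n X Y k Color.r := by
  have hsdiff := h.card_sdiff_add_card_inter
  have hcomm := h.card_sdiff_comm
  have hlt := h.card_inter_lt
  by_cases hXY : 4 ≤ (X \ Y).card
  · obtain ⟨A, hA, hA2, hA3, hk⟩ := exists_subset_inducesColor hs hK4 hXY k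
    -- Three points make `B` red; the other bound leaves at most `|X ∩ Y|` points outside `X ∪ Y`.
    obtain ⟨B, hB, hcB⟩ := Finset.exists_subset_card_eq (s := Y \ X)
      (n := max 3 (n - (X ∩ Y).card - A.card)) (by omega)
    exact h.hasApex_of_disjoint_traces hA hB (by omega) (by omega) (by omega) (by omega) hk
      (.red (by omega))
  · obtain ⟨A, hA, hA2, hA3, hk⟩ :=
      exists_subset_inducesColor hs hK4 (show 4 ≤ (X ∩ Y).card by omega) k
    obtain ⟨z, hz⟩ := Finset.card_pos.1 (show 0 < (Y \ X).card by omega)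
    have hcB : (insert z A).card = A.card + 1 := Finset.card_insert_of_notMem (by grind)
    have hcAB : (A ∪ insert z A).card = A.card + 1 := by
      rw [Finset.union_eq_right.2 (Finset.subset_insert z A), hcB]
    exact h.hasApex_of_traces (B := insert z A) (by grind) (by grind) (by grind) (by omega)
      (by omega) (by omega) (by omega) hk (.red (by omega))

theorem IsEdge.hasApex_of_card_sdiff_eq_four (h : IsEdge n X Y) (hn : 6 ≤ n) (hs : IsSplitting s)
    (hK4 : NoMonoClique s 4) (hXY : (X \ Y).card = 4) (k j : Color) : HasApex s n X Y k j := by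
  have hsdiff := h.card_sdiff_add_card_inter
  obtain ⟨A, hA, hA2, hA3, hk⟩ := exists_subset_inducesColor hs hK4 hXY.ge k
  obtain ⟨B, hB, hB2, hB3, hj⟩ :=
    exists_subset_inducesColor hs hK4 (h.card_sdiff_comm.trans hXY).ge j
  exact h.hasApex_of_disjoint_traces hA hB (by omega) (by omega) (by omega) (by omega) hk hj

theorem IsEdge.hasApex_of_mem_inter (h : IsEdge n X Y) (hn : 3 ≤ n) (hXY : (X \ Y).card ≤ 3)
    {x y z : α} (hx : x ∈ X ∩ Y) (hy : y ∈ X \ Y) (hz : z ∈ Y \ X) :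
    HasApex s n X Y (s x y) (s x z) := by
  have hsdiff := h.card_sdiff_add_card_inter
  have hxy : x ≠ y := by grind
  have hxz : x ≠ z := by grind
  have hyz : y ≠ z := by grind
  have hcA := Finset.card_pair hxy
  have hcB := Finset.card_pair hxz
  have hcAB : (({x, y} : Finset α) ∪ {x, z}).card = 3 := by
    rw [show ({x, y} : Finset α) ∪ {x, z} = {x, y, z} by grind]
    exact Finset.card_eq_three.2 ⟨x, y, z, hxy, hxz, hyz, rfl⟩
  exact h.hasApex_of_traces (by grind) (by grind) (by grind) (by omega) (by omega) (by omega)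
    (by omega) (.pair hxy) (.pair hxz)

theorem IsEdge.hasApex_of_card_sdiff_eq_three_of_forall_ne (h : IsEdge n X Y) (hn : 7 ≤ n)
    (hs : IsSplitting s) (hK4 : NoMonoClique s 4) (hK43 : NoMonoBiclique s 4 3)
    (hXY : (X \ Y).card = 3) (hk : k ≠ Color.r) (hj : j ≠ Color.r)
    (hne : ∀ u ∈ X \ Y, ∀ v ∈ X \ Y, u ≠ v → s u v ≠ k) : HasApex s n X Y k j := by
  have hsdiff := h.card_sdiff_add_card_inter
  have hdisj : Disjoint (X ∩ Y) (Y \ X) := by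
    simpa [Finset.inter_comm] using (Finset.disjoint_sdiff_inter Y X).symm
  obtain ⟨x, hx, z, hz, rfl⟩ :=
    hK43.exists_eq hs hdisj (by omega) (h.card_sdiff_comm.trans hXY).ge hj
  obtain ⟨y, hy, rfl⟩ := hK4.exists_eq_of_notMem hs (x := x) (by omega) hk hne (by grind)
  exact h.hasApex_of_mem_inter (by omega) hXY.le hx hy hz

theorem IsEdge.hasApex_of_card_sdiff_eq_three (h : IsEdge n X Y) (hn : 7 ≤ n)
    (hs : IsSplitting s) (hK4 : NoMonoClique s 4) (hK43 : NoMonoBiclique s 4 3)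
    (hXY : (X \ Y).card = 3) (hk : k ≠ Color.r) (hj : j ≠ Color.r) : HasApex s n X Y k j := by
  by_cases hX : ∀ u ∈ X \ Y, ∀ v ∈ X \ Y, u ≠ v → s u v ≠ k
  · exact h.hasApex_of_card_sdiff_eq_three_of_forall_ne hn hs hK4 hK43 hXY hk hj hX
  by_cases hY : ∀ u ∈ Y \ X, ∀ v ∈ Y \ X, u ≠ v → s u v ≠ j
  · exact (h.symm.hasApex_of_card_sdiff_eq_three_of_forall_ne hn hs hK4 hK43
      (h.card_sdiff_comm.trans hXY) hj hk hY).symm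
  push Not at hX hY
  obtain ⟨u, hu, v, hv, huv, rfl⟩ := hX
  obtain ⟨u', hu', v', hv', huv', rfl⟩ := hY
  have hsdiff := h.card_sdiff_add_card_inter
  have hcA := Finset.card_pair huv
  have hcB := Finset.card_pair huv'
  exact h.hasApex_of_disjoint_traces (by grind) (by grind) (by omega) (by omega) (by omega)
    (by omega) (.pair huv) (.pair huv')

theorem IsEdge.hasApex_self (h : IsEdge n X Y) (hn : 6 ≤ n) (hs : IsSplitting s)
    (hK4 : NoMonoClique s 4) (hXY : (X \ Y).card ≤ 2) (k : Color) : HasApex s n X Y k k := by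
  have hsdiff := h.card_sdiff_add_card_inter
  obtain ⟨A, hA, hA2, hA3, hk⟩ :=
    exists_subset_inducesColor hs hK4 (show 4 ≤ (X ∩ Y).card by omega) k
  have hcard : (A ∪ A).card = A.card := by rw [Finset.union_self]
  exact h.hasApex_of_traces (by grind) (by grind) (by grind) (by omega) (by omega) (by omega)
    (by omega) hk hk

theorem IsEdge.hasApex_b1_right_of_card_sdiff_eq_two (h : IsEdge n X Y) (hn : 7 ≤ n)
    (hs : IsSplitting s) (hK52 : NoMonoBiclique s 5 2) (hXY : (X \ Y).card = 2)
    (hk : k ≠ Color.r) : HasApex s n X Y k Color.b1 := by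
  have hsdiff := h.card_sdiff_add_card_inter
  obtain ⟨x, hx, y, hy, rfl⟩ :=
    hK52.exists_eq hs (Finset.disjoint_sdiff_inter X Y).symm (by omega) hXY.ge hk
  have hxy : x ≠ y := by grind
  have hcA := Finset.card_pair hxy
  have hcB := Finset.card_singleton x
  have hcAB : (({x, y} : Finset α) ∪ {x}).card = 2 := by
    rwa [Finset.union_eq_left.2 (by simp)]
  exact h.hasApex_of_traces (by grind) (by grind) (by ext; grind) (by omega) (by omega) (by omega)
    (by omega) (.pair hxy) (.singleton x)

theorem IsEdge.hasApex_b0_b1_of_card_sdiff_eq_one (h : IsEdge n X Y) (hn : 2 ≤ n)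
    (hXY : (X \ Y).card = 1) : HasApex s n X Y Color.b0 Color.b1 := by
  have hsdiff := h.card_sdiff_add_card_inter
  obtain ⟨z, hz⟩ := Finset.card_eq_one.1 (h.card_sdiff_comm.trans hXY)
  have hcA := Finset.card_empty (α := α)
  have hcB := Finset.card_singleton z
  exact h.hasApex_of_disjoint_traces (Finset.empty_subset _) hz.ge (by omega) (by omega)
    (by omega) (by omega) .empty (.singleton z)

theorem IsEdge.hasApex_b0_b1_of_card_sdiff_le_two (h : IsEdge n X Y) (hn : 7 ≤ n)
    (hs : IsSplitting s) (hK52 : NoMonoBiclique s 5 2) (hXY : (X \ Y).card ≤ 2) :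
    HasApex s n X Y Color.b0 Color.b1 := by
  have hsdiff := h.card_sdiff_add_card_inter
  have hlt := h.card_inter_lt
  obtain hXY | hXY : (X \ Y).card = 1 ∨ (X \ Y).card = 2 := by omega
  · exact h.hasApex_b0_b1_of_card_sdiff_eq_one (by omega) hXY
  · exact h.hasApex_b1_right_of_card_sdiff_eq_two hn hs hK52 hXY (by simp)

theorem IsEdge.hasApex_of_card_sdiff_le_two (h : IsEdge n X Y) (hn : 7 ≤ n) (hs : IsSplitting s)
    (hK4 : NoMonoClique s 4) (hK52 : NoMonoBiclique s 5 2) (hXY : (X \ Y).card ≤ 2)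
    (hk : k ≠ Color.r) (hj : j ≠ Color.r) : HasApex s n X Y k j := by
  cases k <;> cases j
  case b0.b1 => exact h.hasApex_b0_b1_of_card_sdiff_le_two hn hs hK52 hXY
  case b1.b0 =>
    exact (h.symm.hasApex_b0_b1_of_card_sdiff_le_two hn hs hK52
      (h.card_sdiff_comm.trans_le hXY)).symm
  case b0.b0 | b1.b1 => exact h.hasApex_self (by omega) hs hK4 hXY _
  all_goals contradiction

theorem IsEdge.hasApex_of_card_sdiff_le_four (h : IsEdge n X Y) (hn : 7 ≤ n) (hs : IsSplitting s)
    (hK4 : NoMonoClique s 4) (hK43 : NoMonoBiclique s 4 3) (hK52 : NoMonoBiclique s 5 2)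
    (hXY : (X \ Y).card ≤ 4) (k j : Color) : HasApex s n X Y k j := by
  by_cases hj : j = Color.r
  · exact hj ▸ h.hasApex_red_right hn hs hK4 k
  by_cases hk : k = Color.r
  · exact hk ▸ (h.symm.hasApex_red_right hn hs hK4 j).symm
  obtain hXY | hXY | hXY : (X \ Y).card = 4 ∨ (X \ Y).card = 3 ∨ (X \ Y).card ≤ 2 := by omega
  · exact h.hasApex_of_card_sdiff_eq_four (by omega) hs hK4 hXY k j
  · exact h.hasApex_of_card_sdiff_eq_three hn hs hK4 hK43 hXY hk hj
  · exact h.hasApex_of_card_sdiff_le_two hn hs hK4 hK52 hXY hk hj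

end Apex

section InducedColoring

variable {α : Type*} [Fintype α] [DecidableEq α] {s : α → α → Color} {n : ℕ}
  {c : Finset α → Finset α → Color} {X Y Z : Finset α}

/-- On the edges of the complete graph of `n`-element sets, `c` is the coloring induced by `s`.
Nothing is said about the values of `c` at other pairs of sets. -/
def IsInducedColoring (s : α → α → Color) (n : ℕ) (c : Finset α → Finset α → Color) : Prop :=
  ∀ X Y k, IsEdge n X Y → InducesColor s (X ∩ Y) k → c X Y = k

namespace IsInducedColoring

theorem eq_red_iff (hc : IsInducedColoring s n c) (hs : IsSplitting s) (h : IsEdge n X Y) :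
    c X Y = Color.r ↔ 3 ≤ (X ∩ Y).card := by
  refine ⟨fun hred => ?_, fun hcard => hc X Y _ h (.red hcard)⟩
  by_contra! hlt
  obtain ⟨k, hk, hind⟩ := exists_ne_red_inducesColor hs (Nat.le_of_lt_succ hlt)
  exact hk ((hc X Y k h hind).symm.trans hred)

theorem m2_triangle (hc : IsInducedColoring s n c) (hs : IsSplitting s) (hn : 7 ≤ n)
    (hXY : IsEdge n X Y) (hYZ : IsEdge n Y Z) (hXZ : IsEdge n X Z) :
    M2 (c X Y, c Y Z, c X Z) := by
  rw [m2_iff, hc.eq_red_iff hs hXY, hc.eq_red_iff hs hYZ, hc.eq_red_iff hs hXZ]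
  have hcard := card_add_card_add_card_le X Y Z
  rw [hXY.card_left, hYZ.card_left, hYZ.card_right, hXY.card_univ] at hcard
  omega

theorem exists_of_hasApex (hc : IsInducedColoring s n c) (h : IsEdge n X Y) {k j : Color}
    (hapex : HasApex s n X Y k j) :
    ∃ Z : Finset α, Z.card = n ∧ Z ≠ X ∧ Z ≠ Y ∧ c Y Z = j ∧ c X Z = k := by
  obtain ⟨Z, hZ, hZX, hZY, hk, hj⟩ := hapex
  exact ⟨Z, hZ, hZX, hZY, hc Y Z j ⟨h.card_univ, h.card_right, hZ, hZY.symm⟩ hj,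
    hc X Z k ⟨h.card_univ, h.card_left, hZ, hZX.symm⟩ hk⟩

theorem exists_triangle (hc : IsInducedColoring s 7 c) (hs : IsSplitting s)
    (hK4 : NoMonoClique s 4) (hK43 : NoMonoBiclique s 4 3) (hK52 : NoMonoBiclique s 5 2)
    (h : IsEdge 7 X Y) {j k : Color} (hM : M2 (c X Y, j, k)) :
    ∃ Z : Finset α, Z.card = 7 ∧ Z ≠ X ∧ Z ≠ Y ∧ c Y Z = j ∧ c X Z = k := by
  apply hc.exists_of_hasApex h
  rcases m2_iff.1 hM with hred | rfl | rfl
  · have hcard := (hc.eq_red_iff hs h).1 hred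
    have hsdiff := h.card_sdiff_add_card_inter
    exact h.hasApex_of_card_sdiff_le_four le_rfl hs hK4 hK43 hK52 (by omega) k j
  · exact h.hasApex_red_right le_rfl hs hK4 k
  · exact (h.symm.hasApex_red_right le_rfl hs hK4 j).symm

theorem exists_eq (hc : IsInducedColoring s n c) (hs : IsSplitting s) (hn : 7 ≤ n)
    (hK4 : NoMonoClique s 4) (hα : Fintype.card α = 2 * n) (hX : X.card = n) (l : Color) :
    ∃ Y : Finset α, Y.card = n ∧ Y ≠ X ∧ c X Y = l := by
  have h := isEdge_compl hα (by omega) hX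
  obtain ⟨Y, hY, hYX, -, -, hl⟩ := hc.exists_of_hasApex h (h.hasApex_red_right hn hs hK4 l)
  exact ⟨Y, hY, hYX, hl⟩

end IsInducedColoring

theorem isInducedColoring_of_card_inter
    (hc0 : ∀ X Y, X.card = n → Y.card = n → (X ∩ Y).card = 0 → c X Y = Color.b0)
    (hc1 : ∀ X Y, X.card = n → Y.card = n → (X ∩ Y).card = 1 → c X Y = Color.b1)
    (hc2 : ∀ X Y, X.card = n → Y.card = n → ∀ i j, i ≠ j → X ∩ Y = {i, j} → c X Y = s i j)
    (hcr : ∀ X Y, X.card = n → Y.card = n → X ≠ Y → 3 ≤ (X ∩ Y).card → c X Y = Color.r) :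
    IsInducedColoring s n c := by
  rintro X Y k ⟨-, hX, hY, hXY⟩ hk
  generalize hE : X ∩ Y = E at hk
  cases hk with
  | empty => exact hc0 X Y hX hY (by simp [hE])
  | singleton i => exact hc1 X Y hX hY (by simp [hE])
  | pair hij => exact hc2 X Y hX hY _ _ hij hE
  | red hcard => exact hcr X Y hX hY hXY (hE ▸ hcard)

end InducedColoring

/-- If the splitting coloring `s` has no monochromatic `K₄`, `K_{4,3}`, or `K_{5,2}`, then
the induced coloring `c` on the 3432 seven-element subsets of the 14-point set is good with
respect to `M₂`: it satisfies conditions (i), (ii) and (iii). -/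
theorem induced_coloring_good
    -- `s` is a splitting coloring: symmetric with values in {b₀, b₁}
    (s : Fin 14 → Fin 14 → Color)
    (hssym : ∀ i j : Fin 14, i ≠ j → s i j = s j i)
    (hsblue : ∀ i j : Fin 14, i ≠ j → s i j = Color.b0 ∨ s i j = Color.b1)
    -- `s` has no monochromatic K₄
    (hK4 : ¬ ∃ (b : Color) (W : Finset (Fin 14)), W.card = 4 ∧
      ∀ i ∈ W, ∀ j ∈ W, i ≠ j → s i j = b)
    -- `s` has no monochromatic K_{4,3}
    (hK43 : ¬ ∃ (b : Color) (A B : Finset (Fin 14)), Disjoint A B ∧ A.card = 4 ∧ B.card = 3 ∧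
      ∀ i ∈ A, ∀ j ∈ B, s i j = b)
    -- `s` has no monochromatic K_{5,2}
    (hK52 : ¬ ∃ (b : Color) (A B : Finset (Fin 14)), Disjoint A B ∧ A.card = 5 ∧ B.card = 2 ∧
      ∀ i ∈ A, ∀ j ∈ B, s i j = b)
    -- `c` is the coloring on 7-element subsets induced by `s`
    (c : Finset (Fin 14) → Finset (Fin 14) → Color)
    (hc0 : ∀ X Y : Finset (Fin 14), X.card = 7 → Y.card = 7 →
      (X ∩ Y).card = 0 → c X Y = Color.b0)
    (hc1 : ∀ X Y : Finset (Fin 14), X.card = 7 → Y.card = 7 →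
      (X ∩ Y).card = 1 → c X Y = Color.b1)
    (hc2 : ∀ X Y : Finset (Fin 14), X.card = 7 → Y.card = 7 → ∀ i j : Fin 14, i ≠ j →
      X ∩ Y = {i, j} → c X Y = s i j)
    (hcr : ∀ X Y : Finset (Fin 14), X.card = 7 → Y.card = 7 → X ≠ Y →
      3 ≤ (X ∩ Y).card → c X Y = Color.r)
    :
    -- condition (i): each allowed triangle over each edge occurs
    (∀ X Y : Finset (Fin 14), X.card = 7 → Y.card = 7 → X ≠ Y →
      ∀ j k : Color, M2 (c X Y, j, k) →
      ∃ Z : Finset (Fin 14), Z.card = 7 ∧ Z ≠ X ∧ Z ≠ Y ∧ c Y Z = j ∧ c X Z = k) ∧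
    -- condition (ii): every triangle is allowed
    (∀ X Y Z : Finset (Fin 14), X.card = 7 → Y.card = 7 → Z.card = 7 →
      X ≠ Y → Y ≠ Z → X ≠ Z → M2 (c X Y, c Y Z, c X Z)) ∧
    -- condition (iii): every vertex sees every color
    (∀ X : Finset (Fin 14), X.card = 7 → ∀ ℓ : Color,
      ∃ Y : Finset (Fin 14), Y.card = 7 ∧ Y ≠ X ∧ c X Y = ℓ) := by
  have hs : IsSplitting s := ⟨hssym, hsblue⟩
  have hc : IsInducedColoring s 7 c := isInducedColoring_of_card_inter hc0 hc1 hc2 hcr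
  have hcard : Fintype.card (Fin 14) = 2 * 7 := Fintype.card_fin 14
  refine ⟨?_, ?_, ?_⟩
  · intro X Y hX hY hXY j k hM
    exact hc.exists_triangle hs hK4 hK43 hK52 ⟨hcard, hX, hY, hXY⟩ hM
  · intro X Y Z hX hY hZ hXY hYZ hXZ
    exact hc.m2_triangle hs le_rfl ⟨hcard, hX, hY, hXY⟩ ⟨hcard, hY, hZ, hYZ⟩ ⟨hcard, hX, hZ, hXZ⟩
  · intro X hX l
    exact hc.exists_eq hs le_rfl hK4 hcard hX l
end
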